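/- Let 0 < α < n and let T be an operator defined pointwise on C_c^∞(ℝ^n). The following are equivalent: (1) there is a constant c such that |Tf(x)| ≤ c I_α(|∇f|)(x) for all x ∈ ℝ^n and all f ∈ C_c^∞(ℝ^n); (2) there is a constant C such that ‖Tf‖_{L^{n/(n−α),∞}(μ)} ≤ C ∫_{ℝ^n} |∇f(y)| (Mμ)(y)^{1−α/n} dy for every locally finite Borel measure μ on ℝ^n and every f ∈ C_c^∞(ℝ^n). -/

import Mathlib

open MeasureTheory Metric Set Filter
open scoped ENNReal NNReal Topology

noncomputable section

abbrev Rn (n : ℕ) := EuclideanSpace ℝ (Fin n)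

/-- An axis-parallel half-open cube in `ℝⁿ`. -/
structure Cube (n : ℕ) where
  corner : Fin n → ℝ
  side : ℝ
  side_pos : 0 < side

/-- The set of points of a cube. -/
def Cube.carrier {n : ℕ} (Q : Cube n) : Set (Rn n) :=
  {x | ∀ i, Q.corner i ≤ x i ∧ x i < Q.corner i + Q.side}

/-- Surface measure on the unit sphere `𝕊^{n-1} ⊆ ℝⁿ`. -/
def sphereMeasure (n : ℕ) : Measure (Rn n) :=
  (MeasureTheory.Measure.hausdorffMeasure ((n : ℝ) - 1)).restrict (sphere (0 : Rn n) 1)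

/-- `f ∈ C_c^∞(ℝⁿ)`. -/
def IsCcSmooth {n : ℕ} (f : Rn n → ℝ) : Prop :=
  ContDiff ℝ (⊤ : ℕ∞) f ∧ HasCompactSupport f

/-- Truncated rough fractional singular integral. -/
def roughOpTrunc (n : ℕ) (α : ℝ) (Ω f : Rn n → ℝ) (x : Rn n) (ε : ℝ) : ℝ :=
  ∫ y in {y : Rn n | ε < ‖y‖}, (Ω (‖y‖⁻¹ • y) / ‖y‖ ^ ((n : ℝ) + 1 - α)) * f (x - y)

/-- The rough fractional singular integral `T_{Ω,α} f`, as a principal value. -/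
def roughOp (n : ℕ) (α : ℝ) (Ω f : Rn n → ℝ) (x : Rn n) : ℝ :=
  limUnder (𝓝[>] (0 : ℝ)) (roughOpTrunc n α Ω f x)

/-- Riesz potential (modulo its normalizing constant) of a nonnegative function. -/
def rieszPot (n : ℕ) (α : ℝ) (g : Rn n → ℝ) (x : Rn n) : ℝ≥0∞ :=
  ∫⁻ y, ENNReal.ofReal (g y) / ENNReal.ofReal (‖x - y‖ ^ ((n : ℝ) - α))

/-- `|∇f|`. -/
def gradNorm {n : ℕ} (f : Rn n → ℝ) (y : Rn n) : ℝ := ‖gradient f y‖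

/-- Weak Lorentz norm `‖Ω‖_{L^{r,∞}(𝕊^{n-1})}`. -/
def weakLorentzSphere (n : ℕ) (r : ℝ) (Ω : Rn n → ℝ) : ℝ≥0∞ :=
  ⨆ (t : ℝ) (_ : 0 < t), ENNReal.ofReal t * sphereMeasure n {y | t < |Ω y|} ^ (1 / r)

/-- Lorentz norm `‖Ω‖_{L^{r,q}(𝕊^{n-1})}`. -/
def lorentzSphere (n : ℕ) (r q : ℝ) (Ω : Rn n → ℝ) : ℝ≥0∞ :=
  (ENNReal.ofReal r *
      ∫⁻ t in Ioi (0 : ℝ),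
        ENNReal.ofReal t ^ q * sphereMeasure n {y | t < |Ω y|} ^ (q / r) / ENNReal.ofReal t) ^ (1 / q)

/-- The Young function `Φ(t) = t log(1+t)^{1/n'}`, `1/n' = (n-1)/n`. -/
def orliczYoung (n : ℕ) (t : ℝ) : ℝ := t * Real.log (1 + t) ^ (((n : ℝ) - 1) / n)

/-- Admissible Orlicz levels for the `L(log L)^{1/n'}` norm w.r.t. normalized surface measure. -/
def orliczSet (n : ℕ) (Ω : Rn n → ℝ) : Set ℝ :=
  {lam | 0 < lam ∧ ⨍ y, orliczYoung n (|Ω y| / lam) ∂sphereMeasure n ≤ 1}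

/-- Orlicz norm `‖Ω‖_{L(log L)^{1/n'}(𝕊^{n-1})}`. -/
def orliczSphereNorm (n : ℕ) (Ω : Rn n → ℝ) : ℝ := sInf (orliczSet n Ω)

/-- A sparse family of cubes. -/
def IsSparse {n : ℕ} (𝒮 : Set (Cube n)) : Prop :=
  ∃ E : Cube n → Set (Rn n),
    (∀ Q ∈ 𝒮, E Q ⊆ Q.carrier ∧ volume Q.carrier ≤ 2 * volume (E Q)) ∧
    𝒮.Pairwise fun Q P => Disjoint (E Q) (E P)

/-- A dyadic grid of cubes. -/
def IsDyadicGrid {n : ℕ} (𝒟 : Set (Cube n)) : Prop :=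
  (∀ Q ∈ 𝒟, ∃ k : ℤ, Q.side = (2 : ℝ) ^ k) ∧
  (∀ (k : ℤ) (x : Rn n), ∃! Q : Cube n, Q ∈ 𝒟 ∧ Q.side = (2 : ℝ) ^ k ∧ x ∈ Q.carrier) ∧
  (∀ Q ∈ 𝒟, ∀ P ∈ 𝒟, Disjoint Q.carrier P.carrier ∨ Q.carrier ⊆ P.carrier ∨ P.carrier ⊆ Q.carrier)

/-- The shifted dyadic grid `𝒟_t = {2^k([0,1)^n + m + (-1)^k t)}`. -/
def shiftedGrid (n : ℕ) (t : Fin n → ℝ) : Set (Cube n) :=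
  {Q | ∃ (k : ℤ) (m : Fin n → ℤ),
      Q.side = (2 : ℝ) ^ k ∧ Q.corner = fun i => (2 : ℝ) ^ k * ((m i : ℝ) + (-1 : ℝ) ^ k * t i)}

/-- `(⨍_Q |g|^s)^{1/s}` as an extended nonnegative real. -/
def avgLs (n : ℕ) (s : ℝ) (Q : Cube n) (g : Rn n → ℝ) : ℝ≥0∞ :=
  ((volume Q.carrier)⁻¹ * ∫⁻ y in Q.carrier, ENNReal.ofReal |g y| ^ s) ^ (1 / s)

/-- The `L^s` sparse (or dyadic) fractional operator `I^𝒮_{α,L^s}`. -/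
def sparseOpLs (n : ℕ) (α s : ℝ) (𝒮 : Set (Cube n)) (g : Rn n → ℝ) (x : Rn n) : ℝ≥0∞ :=
  ∑' Q : 𝒮, Set.indicator (Q : Cube n).carrier
      (fun _ => ENNReal.ofReal ((Q : Cube n).side ^ α) * avgLs n s (Q : Cube n) g) x

/-- The `L^s` fractional maximal operator `M_{α,L^s}`. -/
def maxOpLs (n : ℕ) (α s : ℝ) (g : Rn n → ℝ) (x : Rn n) : ℝ≥0∞ :=
  ⨆ (Q : Cube n) (_ : x ∈ Q.carrier), ENNReal.ofReal (Q.side ^ α) * avgLs n s Q g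

/-- The measure `w dx` associated with a weight `w`. -/
def wMeasure (n : ℕ) (w : Rn n → ℝ) : Measure (Rn n) :=
  volume.withDensity fun x => ENNReal.ofReal (w x)

/-- Muckenhoupt `A_∞` (via the standard fair-proportion characterization). -/
def IsAinfty {n : ℕ} (w : Rn n → ℝ) : Prop :=
  ∃ C > (0 : ℝ), ∃ δ > (0 : ℝ), ∀ Q : Cube n, ∀ S ⊆ Q.carrier, MeasurableSet S →
    wMeasure n w S ≤
      ENNReal.ofReal C * (volume S / volume Q.carrier) ^ δ * wMeasure n w Q.carrier

/-- `‖g‖_{L^p(w)}` for an `ℝ≥0∞`-valued `g`. -/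
def lpNormW (n : ℕ) (p : ℝ) (w : Rn n → ℝ) (g : Rn n → ℝ≥0∞) : ℝ≥0∞ :=
  (∫⁻ x, g x ^ p ∂wMeasure n w) ^ (1 / p)

/-- `‖g‖_{L^{p,∞}(w)}` for an `ℝ≥0∞`-valued `g`. -/
def weakNormW (n : ℕ) (p : ℝ) (w : Rn n → ℝ) (g : Rn n → ℝ≥0∞) : ℝ≥0∞ :=
  ⨆ (lam : ℝ) (_ : 0 < lam),
    ENNReal.ofReal lam * wMeasure n w {x | ENNReal.ofReal lam < g x} ^ (1 / p)

/-- Unweighted `L^p` "norm" of an `ℝ≥0∞`-valued function. -/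
def lqNorm (n : ℕ) (p : ℝ) (g : Rn n → ℝ≥0∞) : ℝ≥0∞ :=
  (∫⁻ x, g x ^ p) ^ (1 / p)

/-- Unweighted weak `L^p` norm of an `ℝ≥0∞`-valued function. -/
def weakNorm (n : ℕ) (p : ℝ) (g : Rn n → ℝ≥0∞) : ℝ≥0∞ :=
  ⨆ (lam : ℝ) (_ : 0 < lam),
    ENNReal.ofReal lam * volume {x | ENNReal.ofReal lam < g x} ^ (1 / p)

/-- Maximal function of a measure over cubes. -/
def measMax (n : ℕ) (μ : Measure (Rn n)) (x : Rn n) : ℝ≥0∞ :=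
  ⨆ (Q : Cube n) (_ : x ∈ Q.carrier), μ Q.carrier / volume Q.carrier

/-- The rough fractional maximal operator `M_{Ω,α}`. -/
def roughMax (n : ℕ) (α : ℝ) (Ω f : Rn n → ℝ) (x : Rn n) : ℝ≥0∞ :=
  ⨆ (t : ℝ) (_ : 0 < t),
    ENNReal.ofReal (t ^ (α - 1)) * ((volume (ball (0 : Rn n) t))⁻¹ *
      ∫⁻ y in ball (0 : Rn n) t, ENNReal.ofReal |Ω (‖y‖⁻¹ • y) * f (x - y)|)

/-- Average of `f` over the ball `B(x,t)`. -/
def ballAvg {n : ℕ} (f : Rn n → ℝ) (x : Rn n) (t : ℝ) : ℝ :=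
  ⨍ y in ball x t, f y

/-- The sharp rough fractional maximal operator `M^#_{Ω,α}`. -/
def roughMaxSharp (n : ℕ) (α : ℝ) (Ω f : Rn n → ℝ) (x : Rn n) : ℝ≥0∞ :=
  ⨆ (t : ℝ) (_ : 0 < t),
    ENNReal.ofReal (t ^ (α - 1)) * ((volume (ball (0 : Rn n) t))⁻¹ *
      ∫⁻ y in ball (0 : Rn n) t,
        ENNReal.ofReal (|Ω (‖y‖⁻¹ • y)| * |f (x - y) - ballAvg f x t|))

/-- The natural rough maximal operator `M^♮_Ω` (with `α = 1`). -/
def roughMaxNatural (n : ℕ) (Ω f : Rn n → ℝ) (x : Rn n) : ℝ≥0∞ :=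
  ⨆ (t : ℝ) (_ : 0 < t),
    ENNReal.ofReal |⨍ y in ball (0 : Rn n) t, Ω (‖y‖⁻¹ • y) * f (x - y)|

/-- The fractional spherical maximal operator `𝒮_β`. -/
def sphMax (n : ℕ) (β : ℝ) (f : Rn n → ℝ) (x : Rn n) : ℝ≥0∞ :=
  ⨆ (r : ℝ) (_ : 0 < r),
    ENNReal.ofReal (r ^ β) *
      ((MeasureTheory.Measure.hausdorffMeasure ((n : ℝ) - 1) (sphere x r))⁻¹ *
        ∫⁻ y in sphere x r, ENNReal.ofReal |f y|
          ∂(MeasureTheory.Measure.hausdorffMeasure ((n : ℝ) - 1)))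


/-- The measure `w^q dx`. -/
def wqMeasure (n : ℕ) (q : ℝ) (w : Rn n → ℝ) : Measure (Rn n) :=
  volume.withDensity fun x => ENNReal.ofReal (w x) ^ q

/-- Weak norm `‖g‖_{L^{q,∞}(w^q)}` for `ℝ≥0∞`-valued `g`. -/
def weakNormWq (n : ℕ) (q : ℝ) (w : Rn n → ℝ) (g : Rn n → ℝ≥0∞) : ℝ≥0∞ :=
  ⨆ (lam : ℝ) (_ : 0 < lam),
    ENNReal.ofReal lam * wqMeasure n q w {x | ENNReal.ofReal lam < g x} ^ (1 / q)

/-!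
Put `p = n / (n - α)`. By Kolmogorov's inequality
`∫_E f ∂μ ≤ p / (p - 1) * μ(E)^(1 - 1/p) * ‖f‖_{L^{p,∞}(μ)}`, the weak quasi-norm is equivalent to
a norm for `p > 1`, and therefore satisfies Minkowski's integral inequality up to the factor
`p / (p - 1)`. Cubes centered at `y` show that `μ(B(y, r)) ≲ r^n Mμ(y)`, which says precisely that
the kernel `|· - y|^(α - n)` has weak quasi-norm `≲ Mμ(y)^(1/p)`; integrating against `|∇f(y)| dy`
yields (1) ⇒ (2). Conversely, for `μ = δ_x` the weak quasi-norm is evaluation at `x`, while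
`Mδ_x(y)^(1/p) ≲ |x - y|^(α - n)`.
-/

section WeakLp

variable {X Y : Type*} [MeasurableSpace X] [MeasurableSpace Y] {μ : Measure X} {p : ℝ}
  {f : X → ℝ≥0∞}

/-- The weak Lebesgue quasi-norm `‖f‖_{L^{p,∞}(μ)}` of an extended nonnegative function. -/
def weakLpNorm (p : ℝ) (μ : Measure X) (f : X → ℝ≥0∞) : ℝ≥0∞ :=
  ⨆ (t : ℝ) (_ : 0 < t), ENNReal.ofReal t * μ {x | ENNReal.ofReal t < f x} ^ (1 / p)

lemma mul_measure_rpow_le_weakLpNorm (p : ℝ) (μ : Measure X) (f : X → ℝ≥0∞) {t : ℝ} (ht : 0 < t) :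
    ENNReal.ofReal t * μ {x | ENNReal.ofReal t < f x} ^ (1 / p) ≤ weakLpNorm p μ f :=
  le_iSup₂ (f := fun (t : ℝ) (_ : 0 < t) =>
    ENNReal.ofReal t * μ {x | ENNReal.ofReal t < f x} ^ (1 / p)) t ht

lemma weakLpNorm_ofReal_abs (p : ℝ) (μ : Measure X) (u : X → ℝ) :
    weakLpNorm p μ (fun x => ENNReal.ofReal |u x|) =
      ⨆ (t : ℝ) (_ : 0 < t), ENNReal.ofReal t * μ {x | t < |u x|} ^ (1 / p) :=
  iSup_congr fun t => iSup_congr fun ht => by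
    simp only [ENNReal.ofReal_lt_ofReal_iff_of_nonneg ht.le]

lemma weakLpNorm_mono (hp : 0 < p) {g : X → ℝ≥0∞} (hfg : f ≤ g) :
    weakLpNorm p μ f ≤ weakLpNorm p μ g := by
  unfold weakLpNorm
  gcongr with t _ x
  exact hfg x

lemma weakLpNorm_mono_measure (hp : 0 < p) {ν : Measure X} (hμν : μ ≤ ν) :
    weakLpNorm p μ f ≤ weakLpNorm p ν f := by
  unfold weakLpNorm
  gcongr

lemma weakLpNorm_const_mul_le (hp : 0 < p) {c : ℝ≥0∞} (hc : c ≠ ∞) :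
    weakLpNorm p μ (fun x => c * f x) ≤ c * weakLpNorm p μ f := by
  refine iSup₂_le fun t ht => ?_
  obtain rfl | hc0 := eq_or_ne c 0
  · simp [hp]
  have ht' : ENNReal.ofReal (t / c.toReal) = ENNReal.ofReal t / c := by
    rw [ENNReal.ofReal_div_of_pos (ENNReal.toReal_pos hc0 hc), ENNReal.ofReal_toReal hc]
  have hset : {x | ENNReal.ofReal t < c * f x} = {x | ENNReal.ofReal (t / c.toReal) < f x} := by
    simp only [ht', ENNReal.div_lt_iff (.inl hc0) (.inl hc), mul_comm c]
  calc ENNReal.ofReal t * μ {x | ENNReal.ofReal t < c * f x} ^ (1 / p)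
      = c * (ENNReal.ofReal (t / c.toReal) *
          μ {x | ENNReal.ofReal (t / c.toReal) < f x} ^ (1 / p)) := by
        rw [hset, ← mul_assoc, ht', ENNReal.mul_div_cancel hc0 hc]
    _ ≤ c * weakLpNorm p μ f := by
        gcongr
        exact mul_measure_rpow_le_weakLpNorm p μ f (div_pos ht (ENNReal.toReal_pos hc0 hc))

lemma le_weakLpNorm_dirac (p : ℝ) (f : X → ℝ≥0∞) (x : X) :
    f x ≤ weakLpNorm p (Measure.dirac x) f := by
  refine le_of_forall_lt_imp_le_of_dense fun b hb => ?_
  obtain rfl | hb0 := eq_or_ne b 0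
  · exact zero_le
  have hbt : ENNReal.ofReal b.toReal = b := ENNReal.ofReal_toReal hb.ne_top
  have h := mul_measure_rpow_le_weakLpNorm p (Measure.dirac x) f
    (ENNReal.toReal_pos hb0 hb.ne_top)
  rwa [hbt, Measure.dirac_apply_of_mem (show x ∈ {x | b < f x} from hb), ENNReal.one_rpow,
    mul_one] at h

lemma measure_lt_le_weakLpNorm_rpow (hp : 0 < p) {t : ℝ} (ht : 0 < t) :
    μ {x | ENNReal.ofReal t < f x} ≤ weakLpNorm p μ f ^ p * ENNReal.ofReal (t ^ (-p)) := by
  have ht0 : ENNReal.ofReal t ≠ 0 := by simpa using ht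
  have h : μ {x | ENNReal.ofReal t < f x} ^ (1 / p) ≤ weakLpNorm p μ f / ENNReal.ofReal t := by
    rw [ENNReal.le_div_iff_mul_le (.inl ht0) (.inl ENNReal.ofReal_ne_top), mul_comm]
    exact mul_measure_rpow_le_weakLpNorm p μ f ht
  rwa [one_div, ENNReal.rpow_inv_le_iff hp, ENNReal.div_rpow_of_nonneg _ _ hp.le, div_eq_mul_inv,
    ← ENNReal.rpow_neg, ENNReal.ofReal_rpow_of_pos ht] at h

lemma volume_ofReal_lt_inter_Ioi (a : ℝ≥0∞) :
    volume ({t : ℝ | ENNReal.ofReal t < a} ∩ Ioi 0) = a := by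
  induction a with
  | top => simp
  | coe a =>
    have hIoo : {t : ℝ | ENNReal.ofReal t < a} ∩ Ioi 0 = Ioo 0 (a : ℝ) := by
      ext t
      rw [inter_comm]
      refine and_congr_right fun ht => ?_
      rw [mem_ofPred_eq, ← ENNReal.ofReal_coe_nnreal,
        ENNReal.ofReal_lt_ofReal_iff_of_nonneg (le_of_lt ht)]
    simp [hIoo]

lemma lintegral_eq_lintegral_measure_ofReal_lt [SFinite μ] (hf : Measurable f) :
    ∫⁻ x, f x ∂μ = ∫⁻ t in Ioi (0 : ℝ), μ {x | ENNReal.ofReal t < f x} := by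
  set S : Set (X × ℝ) := {q | ENNReal.ofReal q.2 < f q.1}
  have hS : MeasurableSet S := measurableSet_lt (by fun_prop) (by fun_prop)
  calc ∫⁻ x, f x ∂μ
      = ∫⁻ x, (volume.restrict (Ioi 0)) (Prod.mk x ⁻¹' S) ∂μ := by
        refine lintegral_congr fun x => ?_
        rw [Measure.restrict_apply (hS.preimage (by fun_prop))]
        exact (volume_ofReal_lt_inter_Ioi (f x)).symm
    _ = (μ.prod (volume.restrict (Ioi 0))) S := (Measure.prod_apply hS).symm
    _ = ∫⁻ t in Ioi (0 : ℝ), μ {x | ENNReal.ofReal t < f x} := Measure.prod_apply_symm hS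

lemma lintegral_Ioi_rpow_neg (hp : 1 < p) {T : ℝ} (hT : 0 < T) :
    ∫⁻ t in Ioi T, ENNReal.ofReal (t ^ (-p)) = ENNReal.ofReal (T ^ (1 - p) / (p - 1)) := by
  rw [← ofReal_integral_eq_lintegral_ofReal (integrableOn_Ioi_rpow_of_lt (by linarith) hT)
    (ae_restrict_of_forall_mem measurableSet_Ioi fun t ht => Real.rpow_nonneg (hT.trans ht).le _),
    integral_Ioi_rpow_of_lt (by linarith) hT, neg_div, ← div_neg]
  ring_nf

lemma lintegral_le_add_weakLpNorm_rpow [SFinite μ] (hp : 1 < p) (hf : Measurable f) {T : ℝ}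
    (hT : 0 < T) :
    ∫⁻ x, f x ∂μ ≤ ENNReal.ofReal T * μ univ +
      weakLpNorm p μ f ^ p * ENNReal.ofReal (T ^ (1 - p) / (p - 1)) := by
  have hp0 : 0 < p := by linarith
  have hlow : ∫⁻ t in Ioc 0 T, μ {x | ENNReal.ofReal t < f x} ≤ ENNReal.ofReal T * μ univ :=
    (lintegral_mono fun t => measure_mono (subset_univ _)).trans_eq (by simp [mul_comm])
  have hhigh : ∫⁻ t in Ioi T, μ {x | ENNReal.ofReal t < f x} ≤
      weakLpNorm p μ f ^ p * ENNReal.ofReal (T ^ (1 - p) / (p - 1)) := by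
    rw [← lintegral_Ioi_rpow_neg hp hT, ← lintegral_const_mul _ (by fun_prop)]
    exact setLIntegral_mono' measurableSet_Ioi fun t ht =>
      measure_lt_le_weakLpNorm_rpow hp0 (hT.trans ht)
  rw [lintegral_eq_lintegral_measure_ofReal_lt hf, ← Ioc_union_Ioi_eq_Ioi hT.le]
  exact (lintegral_union_le _ _ _).trans (add_le_add hlow hhigh)

lemma mul_add_rpow_mul_eq_of_eq_div_rpow (hp : 1 < p) {w m T : ℝ} (hw : 0 < w) (hm : 0 < m)
    (hT : T = w / m ^ (1 / p)) :
    T * m + w ^ p * (T ^ (1 - p) / (p - 1)) = p / (p - 1) * w * m ^ (1 - 1 / p) := by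
  have hp0 : p ≠ 0 := by positivity
  have hp1 : p - 1 ≠ 0 := (sub_pos.2 hp).ne'
  have hpow : w ^ p * T ^ (1 - p) = w * m ^ (1 - 1 / p) := by
    rw [hT, Real.div_rpow hw.le (by positivity), ← Real.rpow_mul hm.le, ← mul_div_assoc,
      ← Real.rpow_add hw, add_sub_cancel, Real.rpow_one, div_eq_mul_inv, ← Real.rpow_neg hm.le]
    congr 2
    field_simp
    ring
  have hlin : T * m = w * m ^ (1 - 1 / p) := by
    rw [hT, Real.rpow_sub hm, Real.rpow_one]
    ring
  rw [← mul_div_assoc, hpow, hlin]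
  field_simp
  ring

lemma lintegral_le_weakLpNorm [IsFiniteMeasure μ] (hp : 1 < p) (hf : Measurable f) :
    ∫⁻ x, f x ∂μ ≤
      ENNReal.ofReal (p / (p - 1)) * μ univ ^ (1 - 1 / p) * weakLpNorm p μ f := by
  have hp0 : 0 < p := by linarith
  have hp1 : 0 < p - 1 := sub_pos.2 hp
  obtain hμ | hμ := eq_or_ne (μ univ) 0
  · simp [Measure.measure_univ_eq_zero.1 hμ]
  obtain hW | hW := eq_or_ne (weakLpNorm p μ f) 0
  · rw [lintegral_eq_lintegral_measure_ofReal_lt hf,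
      setLIntegral_congr_fun (g := 0) measurableSet_Ioi fun t ht => le_antisymm
        ((measure_lt_le_weakLpNorm_rpow hp0 ht).trans_eq (by simp [hW, hp0])) zero_le]
    simp
  obtain hWt | hWt := eq_or_ne (weakLpNorm p μ f) ∞
  · simp [hWt, ENNReal.mul_top, div_pos hp0 hp1, hμ]
  have hw := ENNReal.toReal_pos hW hWt
  have hm := ENNReal.toReal_pos hμ (measure_ne_top μ univ)
  set w := (weakLpNorm p μ f).toReal
  set m := (μ univ).toReal
  have hwW : weakLpNorm p μ f = ENNReal.ofReal w := (ENNReal.ofReal_toReal hWt).symm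
  have hmμ : μ univ = ENNReal.ofReal m := (ENNReal.ofReal_toReal (measure_ne_top μ univ)).symm
  -- The threshold `w / m ^ (1 / p)` balances the contributions of low and high levels.
  have hT : 0 < w / m ^ (1 / p) := by positivity
  refine (lintegral_le_add_weakLpNorm_rpow hp hf hT).trans_eq ?_
  rw [hwW, hmμ, ENNReal.ofReal_rpow_of_pos hw, ENNReal.ofReal_rpow_of_pos hm,
    ← ENNReal.ofReal_mul hT.le, ← ENNReal.ofReal_mul (by positivity),
    ← ENNReal.ofReal_add (by positivity) (by positivity),
    mul_add_rpow_mul_eq_of_eq_div_rpow hp hw hm rfl, ← ENNReal.ofReal_mul (by positivity),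
    ← ENNReal.ofReal_mul (by positivity), mul_right_comm]

lemma setLIntegral_le_weakLpNorm (hp : 1 < p) (hf : Measurable f) {E : Set X} (hE : μ E ≠ ∞) :
    ∫⁻ x in E, f x ∂μ ≤
      ENNReal.ofReal (p / (p - 1)) * μ E ^ (1 - 1 / p) * weakLpNorm p μ f := by
  have : IsFiniteMeasure (μ.restrict E) := isFiniteMeasure_restrict.2 hE
  calc ∫⁻ x in E, f x ∂μ
      ≤ ENNReal.ofReal (p / (p - 1)) * μ E ^ (1 - 1 / p) * weakLpNorm p (μ.restrict E) f := by
        simpa only [Measure.restrict_apply_univ] using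
          lintegral_le_weakLpNorm (μ := μ.restrict E) hp hf
    _ ≤ _ := by
        gcongr
        exact weakLpNorm_mono_measure (by linarith) Measure.restrict_le_self

lemma weakLpNorm_le_of_setLIntegral_le [SigmaFinite μ] (hp : 0 < p) (hf : Measurable f)
    {B : ℝ≥0∞} (h : ∀ E, MeasurableSet E → μ E ≠ ∞ → ∫⁻ x in E, f x ∂μ ≤ μ E ^ (1 - 1 / p) * B) :
    weakLpNorm p μ f ≤ B := by
  refine iSup₂_le fun t _ => ?_
  have hsuper : MeasurableSet {x | ENNReal.ofReal t < f x} := measurableSet_lt measurable_const hf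
  have hfinite (E : Set X) (hE : MeasurableSet E) (hEf : E ⊆ {x | ENNReal.ofReal t < f x})
      (hEt : μ E ≠ ∞) : ENNReal.ofReal t * μ E ^ (1 / p) ≤ B := by
    obtain hE0 | hE0 := eq_or_ne (μ E) 0
    · simp [hE0, hp]
    rw [← ENNReal.mul_le_mul_iff_right (a := μ E ^ (1 - 1 / p)) (by simp [hE0, hEt])
      (by simp [hE0, hEt])]
    calc μ E ^ (1 - 1 / p) * (ENNReal.ofReal t * μ E ^ (1 / p))
        = ENNReal.ofReal t * μ E := by
          rw [mul_left_comm, ← ENNReal.rpow_add _ _ hE0 hEt, sub_add_cancel, ENNReal.rpow_one]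
      _ = ∫⁻ _ in E, ENNReal.ofReal t ∂μ := (setLIntegral_const _ _).symm
      _ ≤ ∫⁻ x in E, f x ∂μ := setLIntegral_mono' hE fun x hx => (hEf hx).le
      _ ≤ μ E ^ (1 - 1 / p) * B := h E hE hEt
  have hsup : μ {x | ENNReal.ofReal t < f x} ^ (1 / p) =
      ⨆ k, μ ({x | ENNReal.ofReal t < f x} ∩ spanningSets μ k) ^ (1 / p) := by
    simp only [← Measure.restrict_apply hsuper]
    rw [← Measure.iSup_restrict_spanningSets]
    exact (ENNReal.orderIsoRpow (1 / p) (by positivity)).map_iSup _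
  rw [hsup, ENNReal.mul_iSup]
  exact iSup_le fun k => hfinite _ (hsuper.inter (measurableSet_spanningSets μ k))
    inter_subset_left (measure_ne_top_of_subset inter_subset_right
      (measure_spanningSets_lt_top μ k).ne)

lemma weakLpNorm_lintegral_le [SigmaFinite μ] {ν : Measure Y} [SFinite ν] (hp : 1 < p)
    {k : X → Y → ℝ≥0∞} (hk : Measurable (Function.uncurry k)) :
    weakLpNorm p μ (fun x => ∫⁻ y, k x y ∂ν) ≤
      ENNReal.ofReal (p / (p - 1)) * ∫⁻ y, weakLpNorm p μ (fun x => k x y) ∂ν := by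
  have hp1 : 0 ≤ 1 - 1 / p := sub_nonneg.2 ((div_le_one (by linarith)).2 hp.le)
  refine weakLpNorm_le_of_setLIntegral_le (by linarith) hk.lintegral_prod_right fun E _ hEt => ?_
  have hconst : ENNReal.ofReal (p / (p - 1)) * μ E ^ (1 - 1 / p) ≠ ∞ :=
    ENNReal.mul_ne_top ENNReal.ofReal_ne_top (ENNReal.rpow_ne_top_of_nonneg hp1 hEt)
  calc ∫⁻ x in E, ∫⁻ y, k x y ∂ν ∂μ
      = ∫⁻ y, ∫⁻ x in E, k x y ∂μ ∂ν := lintegral_lintegral_swap hk.aemeasurable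
    _ ≤ ∫⁻ y, ENNReal.ofReal (p / (p - 1)) * μ E ^ (1 - 1 / p) *
          weakLpNorm p μ (fun x => k x y) ∂ν :=
        lintegral_mono fun y => setLIntegral_le_weakLpNorm hp hk.of_uncurry_right hEt
    _ = μ E ^ (1 - 1 / p) *
          (ENNReal.ofReal (p / (p - 1)) * ∫⁻ y, weakLpNorm p μ (fun x => k x y) ∂ν) := by
        rw [lintegral_const_mul' _ _ hconst, mul_comm (ENNReal.ofReal _), mul_assoc]

lemma weakLpNorm_edist_rpow_neg_le [PseudoEMetricSpace X] {d β : ℝ} (hd : 0 < d) (hβ : 0 < β)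
    {A : ℝ≥0∞} {y : X} (hA : ∀ r : ℝ, 0 < r → μ (eball y (ENNReal.ofReal r)) ≤
      ENNReal.ofReal r ^ d * A) :
    weakLpNorm (d / β) μ (fun x => edist x y ^ (-β)) ≤ A ^ (β / d) := by
  refine iSup₂_le fun t ht => ?_
  set r := t ^ (-β⁻¹) with hr
  have hr0 : 0 < r := by positivity
  have hrt : ENNReal.ofReal t = ENNReal.ofReal r ^ (-β) := by
    rw [ENNReal.ofReal_rpow_of_pos hr0, hr, ← Real.rpow_mul ht.le, neg_mul_neg,
      inv_mul_cancel₀ hβ.ne', Real.rpow_one]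
  have hsub : {x | ENNReal.ofReal t < edist x y ^ (-β)} ⊆ eball y (ENNReal.ofReal r) := by
    intro x hx
    rwa [mem_ofPred_eq, hrt, ENNReal.rpow_neg, ENNReal.rpow_neg, ENNReal.inv_lt_inv,
      ENNReal.rpow_lt_rpow_iff hβ] at hx
  have hr1 : ENNReal.ofReal r ≠ 0 := by simpa using hr0
  calc ENNReal.ofReal t * μ {x | ENNReal.ofReal t < edist x y ^ (-β)} ^ (1 / (d / β))
      ≤ ENNReal.ofReal r ^ (-β) * (ENNReal.ofReal r ^ d * A) ^ (β / d) := by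
        rw [hrt, one_div_div, ← hrt]
        gcongr
        exact (measure_mono hsub).trans (hA r hr0)
    _ = A ^ (β / d) := by
        rw [ENNReal.mul_rpow_of_nonneg _ _ (by positivity), ← ENNReal.rpow_mul,
          mul_div_cancel₀ _ hd.ne', ← mul_assoc, ← ENNReal.rpow_add _ _ hr1 ENNReal.ofReal_ne_top,
          neg_add_cancel, ENNReal.rpow_zero, one_mul]

end WeakLp

section Cubes

variable {n : ℕ}

lemma Cube.volume_carrier (Q : Cube n) : volume Q.carrier = ENNReal.ofReal Q.side ^ n := by
  have hpre : Q.carrier = (MeasurableEquiv.toLp 2 (Fin n → ℝ)).symm ⁻¹'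
      (univ.pi fun i => Ico (Q.corner i) (Q.corner i + Q.side)) := by
    ext x
    simp [Cube.carrier]
  rw [hpre, (EuclideanSpace.volume_preserving_symm_measurableEquiv_toLp
    (Fin n)).measure_preimage_equiv, Real.volume_pi_Ico]
  simp

lemma Cube.edist_le (Q : Cube n) {x y : Rn n} (hx : x ∈ Q.carrier) (hy : y ∈ Q.carrier) :
    edist x y ≤ (n : ℝ≥0∞) ^ (1 / 2 : ℝ) * ENNReal.ofReal Q.side := by
  have hsup : edist (WithLp.ofLp x) (WithLp.ofLp y) ≤ ENNReal.ofReal Q.side := by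
    refine edist_pi_le_iff.2 fun i => ?_
    rw [edist_dist, Real.dist_eq]
    refine ENNReal.ofReal_le_ofReal (abs_le.2 ⟨?_, ?_⟩) <;> linarith [hx i, hy i]
  calc edist x y ≤ (n : ℝ≥0∞) ^ (1 / 2 : ℝ) * edist (WithLp.ofLp x) (WithLp.ofLp y) := by
        simpa [ENNReal.coe_rpow_of_nonneg] using
          PiLp.antilipschitzWith_ofLp 2 (fun _ : Fin n => ℝ) x y
    _ ≤ _ := by gcongr

/-- The cube with center `y` and side length `2 * r`. -/
def Cube.centered (y : Rn n) {r : ℝ} (hr : 0 < r) : Cube n :=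
  ⟨fun i => y i - r, 2 * r, by positivity⟩

lemma Cube.eball_subset_centered (y : Rn n) {r : ℝ} (hr : 0 < r) :
    eball y (ENNReal.ofReal r) ⊆ (Cube.centered y hr).carrier := by
  intro x hx i
  rw [eball_ofReal, mem_ball, dist_eq_norm] at hx
  have hi : |x i - y i| < r := (PiLp.norm_apply_le (x - y) i).trans_lt hx
  rw [abs_lt] at hi
  constructor <;> simp only [Cube.centered] <;> linarith

lemma measure_le_volume_mul_measMax (μ : Measure (Rn n)) (Q : Cube n) {y : Rn n}
    (hy : y ∈ Q.carrier) : μ Q.carrier ≤ volume Q.carrier * measMax n μ y := by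
  have hside : ENNReal.ofReal Q.side ≠ 0 := by simpa using Q.side_pos
  rw [← ENNReal.div_le_iff' (by simp [Q.volume_carrier, hside]) (by simp [Q.volume_carrier])]
  exact le_iSup₂ (f := fun (Q : Cube n) (_ : y ∈ Q.carrier) => μ Q.carrier / volume Q.carrier) Q hy

lemma measure_eball_le_measMax (μ : Measure (Rn n)) (y : Rn n) {r : ℝ} (hr : 0 < r) :
    μ (eball y (ENNReal.ofReal r)) ≤ ENNReal.ofReal r ^ (n : ℝ) * (2 ^ n * measMax n μ y) := by
  have hy : y ∈ eball y (ENNReal.ofReal r) := mem_eball_self (by simpa using hr)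
  calc μ (eball y (ENNReal.ofReal r)) ≤ μ (Cube.centered y hr).carrier :=
        measure_mono (Cube.eball_subset_centered y hr)
    _ ≤ volume (Cube.centered y hr).carrier * measMax n μ y :=
        measure_le_volume_mul_measMax μ _ (Cube.eball_subset_centered y hr hy)
    _ = _ := by
        rw [Cube.volume_carrier, Cube.centered, ENNReal.ofReal_mul zero_le_two, mul_pow,
          ENNReal.ofReal_ofNat, ENNReal.rpow_natCast]
        ring

lemma measMax_dirac_le (x y : Rn n) :
    measMax n (Measure.dirac x) y ≤ (n : ℝ≥0∞) ^ ((n : ℝ) / 2) / edist x y ^ (n : ℝ) := by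
  refine iSup₂_le fun Q hy => ?_
  by_cases hx : x ∈ Q.carrier
  · have hconst : (n : ℝ≥0∞) ^ ((n : ℝ) / 2) ≠ 0 := by
      simp [ENNReal.rpow_eq_zero_iff]
    have hdist : edist x y ^ n ≤ (n : ℝ≥0∞) ^ ((n : ℝ) / 2) * ENNReal.ofReal Q.side ^ n := by
      calc edist x y ^ n ≤ ((n : ℝ≥0∞) ^ (1 / 2 : ℝ) * ENNReal.ofReal Q.side) ^ n := by
            gcongr
            exact Q.edist_le hx hy
        _ = _ := by
            rw [mul_pow, ← ENNReal.rpow_natCast, ← ENNReal.rpow_mul, one_div_mul_eq_div]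
    rw [Measure.dirac_apply_of_mem hx, Q.volume_carrier, ENNReal.rpow_natCast,
      ENNReal.le_div_iff_mul_le (.inr hconst) (.inl (by simp [edist_ne_top])), one_div, mul_comm,
      ← div_eq_mul_inv]
    exact ENNReal.div_le_of_le_mul hdist
  · simp [hx]

end Cubes

section RieszPotential

variable {n : ℕ} {α : ℝ}

lemma rieszPot_eq_lintegral_edist (hα : α ≤ n) (g : Rn n → ℝ) :
    rieszPot n α g =
      fun x => ∫⁻ y, ENNReal.ofReal (g y) * edist x y ^ (-((n : ℝ) - α)) := by
  ext x
  refine lintegral_congr fun y => ?_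
  rw [edist_dist, dist_eq_norm, ENNReal.rpow_neg,
    ENNReal.ofReal_rpow_of_nonneg (norm_nonneg _) (by linarith), div_eq_mul_inv]

lemma weakLpNorm_edist_rpow_le_measMax (hn : 0 < n) (hα : α < n) (μ : Measure (Rn n))
    (y : Rn n) :
    weakLpNorm (n / (n - α)) μ (fun x => edist x y ^ (-((n : ℝ) - α))) ≤
      2 ^ ((n : ℝ) - α) * measMax n μ y ^ (1 - α / n) := by
  have hn' : (0 : ℝ) < n := Nat.cast_pos.2 hn
  have hβ : 0 < (n : ℝ) - α := by linarith
  refine (weakLpNorm_edist_rpow_neg_le hn' hβ fun r hr =>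
    measure_eball_le_measMax μ y hr).trans_eq ?_
  rw [ENNReal.mul_rpow_of_nonneg _ _ (by positivity), ← ENNReal.rpow_natCast, ← ENNReal.rpow_mul,
    mul_div_cancel₀ _ hn'.ne', sub_div, div_self hn'.ne']

theorem weakLpNorm_rieszPot_le (hα0 : 0 < α) (hαn : α < n) (μ : Measure (Rn n))
    [IsLocallyFiniteMeasure μ] {g : Rn n → ℝ} (hg : Measurable g) :
    weakLpNorm (n / (n - α)) μ (rieszPot n α g) ≤
      ENNReal.ofReal (n / α * 2 ^ ((n : ℝ) - α)) *
        ∫⁻ y, ENNReal.ofReal (g y) * measMax n μ y ^ (1 - α / n) := by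
  have hn : (0 : ℝ) < n := hα0.trans hαn
  have hβ : 0 < (n : ℝ) - α := by linarith
  have hp : 1 < n / (n - α) := (one_lt_div hβ).2 (by linarith)
  have hconj : n / (n - α) / (n / (n - α) - 1) = n / α := by
    rw [div_sub_one hβ.ne', sub_sub_cancel, div_div_div_cancel_right₀ hβ.ne']
  have hkernel (y : Rn n) :
      weakLpNorm (n / (n - α)) μ
          (fun x => ENNReal.ofReal (g y) * edist x y ^ (-((n : ℝ) - α))) ≤
        2 ^ ((n : ℝ) - α) * (ENNReal.ofReal (g y) * measMax n μ y ^ (1 - α / n)) :=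
    (weakLpNorm_const_mul_le (by linarith) ENNReal.ofReal_ne_top).trans <|
      (mul_le_mul_right (weakLpNorm_edist_rpow_le_measMax (Nat.cast_pos.1 hn) hαn μ y) _).trans_eq
        (mul_left_comm _ _ _)
  rw [rieszPot_eq_lintegral_edist hαn.le]
  calc _ ≤ ENNReal.ofReal (n / α) * ∫⁻ y, weakLpNorm (n / (n - α)) μ
          (fun x => ENNReal.ofReal (g y) * edist x y ^ (-((n : ℝ) - α))) := by
        rw [← hconj]
        exact weakLpNorm_lintegral_le hp (by unfold Function.uncurry; fun_prop)
    _ ≤ ENNReal.ofReal (n / α) * ∫⁻ y, 2 ^ ((n : ℝ) - α) *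
          (ENNReal.ofReal (g y) * measMax n μ y ^ (1 - α / n)) := by
        gcongr with y
        exact hkernel y
    _ = _ := by
        rw [lintegral_const_mul' _ _ (by simp), ← mul_assoc,
          ENNReal.ofReal_mul (by positivity), ← ENNReal.ofReal_rpow_of_pos two_pos,
          ENNReal.ofReal_ofNat]

theorem lintegral_mul_measMax_dirac_rpow_le (hn : 0 < n) (hα : α ≤ n) (g : Rn n → ℝ)
    (x : Rn n) :
    ∫⁻ y, ENNReal.ofReal (g y) * measMax n (Measure.dirac x) y ^ (1 - α / n) ≤
      ENNReal.ofReal ((n : ℝ) ^ (((n : ℝ) - α) / 2)) * rieszPot n α g x := by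
  have hn' : (0 : ℝ) < n := Nat.cast_pos.2 hn
  have hs : 0 ≤ 1 - α / n := sub_nonneg.2 ((div_le_one hn').2 hα)
  have hpow (y : Rn n) : measMax n (Measure.dirac x) y ^ (1 - α / n) ≤
      (n : ℝ≥0∞) ^ (((n : ℝ) - α) / 2) * edist x y ^ (-((n : ℝ) - α)) := by
    refine (ENNReal.rpow_le_rpow (measMax_dirac_le x y) hs).trans_eq ?_
    rw [ENNReal.div_rpow_of_nonneg _ _ hs, ← ENNReal.rpow_mul, ← ENNReal.rpow_mul, div_eq_mul_inv,
      ← ENNReal.rpow_neg]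
    congr 2 <;> field_simp
  rw [rieszPot_eq_lintegral_edist hα, ← ENNReal.ofReal_rpow_of_pos hn', ENNReal.ofReal_natCast,
    ← lintegral_const_mul' _ _ (ENNReal.rpow_ne_top_of_nonneg (by linarith) (by simp))]
  exact lintegral_mono fun y =>
    (mul_le_mul_right (hpow y) _).trans_eq (mul_left_comm _ _ _)

lemma measurable_gradNorm (f : Rn n → ℝ) : Measurable (gradNorm f) :=
  ((InnerProductSpace.toDual ℝ (Rn n)).symm.continuous.measurable.comp
    (measurable_fderiv ℝ f)).norm

theorem statement1_general {ι : Type*} (hα0 : 0 < α) (hαn : α < n)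
    (u : ι → Rn n → ℝ≥0∞) (g : ι → Rn n → ℝ) (hg : ∀ i, Measurable (g i)) :
    (∃ c > (0 : ℝ), ∀ i x, u i x ≤ ENNReal.ofReal c * rieszPot n α (g i) x) ↔
    (∃ C > (0 : ℝ), ∀ μ : Measure (Rn n), IsLocallyFiniteMeasure μ → ∀ i,
      weakLpNorm (n / (n - α)) μ (u i) ≤
        ENNReal.ofReal C * ∫⁻ y, ENNReal.ofReal (g i y) * measMax n μ y ^ (1 - α / n)) := by
  have hn : (0 : ℝ) < n := hα0.trans hαn
  have hp : 0 < n / (n - α) := div_pos hn (by linarith)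
  constructor
  · rintro ⟨c, hc, hu⟩
    refine ⟨c * (n / α * 2 ^ ((n : ℝ) - α)), by positivity, fun μ _ i => ?_⟩
    rw [ENNReal.ofReal_mul hc.le, mul_assoc]
    exact (weakLpNorm_mono hp (hu i)).trans <|
      (weakLpNorm_const_mul_le hp ENNReal.ofReal_ne_top).trans <|
        mul_le_mul_right (weakLpNorm_rieszPot_le hα0 hαn μ (hg i)) _
  · rintro ⟨C, hC, hu⟩
    refine ⟨C * (n : ℝ) ^ (((n : ℝ) - α) / 2), by positivity, fun i x => ?_⟩
    rw [ENNReal.ofReal_mul hC.le, mul_assoc]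
    exact (le_weakLpNorm_dirac _ _ x).trans <| (hu (Measure.dirac x) inferInstance i).trans <|
      mul_le_mul_right (lintegral_mul_measMax_dirac_rpow_le (Nat.cast_pos.1 hn) hαn.le (g i) x) _

end RieszPotential

/-- Characterization: `|Tf| ≤ c I_α(|∇f|)` pointwise iff the weak endpoint
Sobolev inequality `‖Tf‖_{L^{n/(n-α),∞}(μ)} ≤ C ∫ |∇f| (Mμ)^{1-α/n}` holds for all locally
finite Borel measures `μ`. -/
theorem statement1 (n : ℕ) (α : ℝ) (hα0 : 0 < α) (hαn : α < n)
    (T : (Rn n → ℝ) → Rn n → ℝ) :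
    (∃ c > (0 : ℝ), ∀ f : Rn n → ℝ, IsCcSmooth f → ∀ x : Rn n,
        ENNReal.ofReal |T f x| ≤ ENNReal.ofReal c * rieszPot n α (gradNorm f) x) ↔
    (∃ C > (0 : ℝ), ∀ μ : Measure (Rn n), IsLocallyFiniteMeasure μ →
        ∀ f : Rn n → ℝ, IsCcSmooth f →
          (⨆ (lam : ℝ) (_ : 0 < lam),
              ENNReal.ofReal lam * μ {x | lam < |T f x|} ^ (((n : ℝ) - α) / n)) ≤
            ENNReal.ofReal C *
              ∫⁻ y, ENNReal.ofReal (gradNorm f y) * measMax n μ y ^ (1 - α / n)) := by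
  simpa only [Subtype.forall, weakLpNorm_ofReal_abs, one_div_div] using
    statement1_general hα0 hαn
      (fun (f : {f : Rn n → ℝ // IsCcSmooth f}) x => ENNReal.ofReal |T f.1 x|)
      (fun f => gradNorm f.1) (fun f => measurable_gradNorm f.1)

end
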